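/- Fix N and 0 ≤ m ≤ N. Let δ : {1,…,N} → ℝ be given by δ_j = −1 for j ≤ m and δ_j = 1 for j > m, let Δ be the N×N diagonal matrix with diagonal δ, and let D_m be the 2N×2N block-diagonal matrix diag(Δ, Δ). Let A be a symmetric real N×N matrix (Aᵀ = A) and C a skew-symmetric real N×N matrix (Cᵀ = −C), and set X equal to the 2N×2N block matrix [[A, C], [−C, A]]. Then the Hessian quadratic form satisfies the identity Tr[D_m·(J·X)²] = −2·Σ_{j=1}^{N} δ_j·(A_{jj})² − 2·Σ_{1 ≤ i < j ≤ N} (δ_i + δ_j)·((A_{ij})² + (C_{ij})²). -/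

import Mathlib

open Matrix

/-- `J` denotes the 2N×2N real matrix with block form [[0, I_N], [−I_N, 0]]. -/
noncomputable def J (N : ℕ) : Matrix (Fin N ⊕ Fin N) (Fin N ⊕ Fin N) ℝ :=
  Matrix.fromBlocks 0 1 (-1) 0

/-- `δ_j = −1` for the first `m` indices and `1` for the remaining ones. -/
noncomputable def delta (N m : ℕ) : Fin N → ℝ :=
  fun j => if (j : ℕ) < m then -1 else 1

/-!
For `A` symmetric and `C` skew-symmetric, `Y = J X` is itself skew-symmetric, so `Y² = -Y Yᵀ` and
`Tr[D Y²]` is minus the sum of the squared entries of `Y`, weighted by row. Each entry of `A` and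
of `C` occurs twice in `Y` up to sign, and the matrix of `A_{ij}² + C_{ij}²` is symmetric, so the
terms `(i, j)` and `(j, i)` combine to the weight `δ_i + δ_j`.
-/

section WeightedTrace

variable {n p R : Type*} [Fintype n] [DecidableEq n] [Fintype p]

theorem trace_diagonal_mul_mul_transpose [CommSemiring R] (d : n → R) (M : Matrix n p R) :
    (diagonal d * (M * Mᵀ)).trace = ∑ i, ∑ j, d i * M i j ^ 2 := by
  simp only [trace, diag_apply, diagonal_mul]
  simp only [mul_apply, transpose_apply, Finset.mul_sum, sq]

theorem trace_diagonal_mul_sq_of_transpose_eq_neg [CommRing R] (d : n → R) {Y : Matrix n n R}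
    (hY : Yᵀ = -Y) : (diagonal d * Y ^ 2).trace = -∑ i, ∑ j, d i * Y i j ^ 2 := by
  have sq_eq : Y ^ 2 = -(Y * Yᵀ) := by rw [hY, mul_neg, neg_neg, sq]
  rw [sq_eq, mul_neg, trace_neg, trace_diagonal_mul_mul_transpose]

end WeightedTrace

section PairSums

variable {ι : Type*} [Fintype ι] [LinearOrder ι] [LocallyFiniteOrderTop ι]
  [LocallyFiniteOrderBot ι]

theorem sum_sum_eq_sum_diag_add_sum_sum_Ioi {M : Type*} [AddCommMonoid M] (f : ι → ι → M) :
    ∑ i, ∑ j, f i j = ∑ i, f i i + ∑ i, ∑ j ∈ Finset.Ioi i, (f i j + f j i) := by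
  rw [Finset.sum_sum_Ioi_add_eq_sum_sum_off_diag (fun j i => f i j), ← Finset.sum_add_distrib]
  exact Finset.sum_congr rfl fun i _ => Fintype.sum_eq_add_sum_compl i (f i)

theorem sum_sum_mul_eq_sum_diag_add_sum_sum_Ioi_of_symm {R : Type*}
    [NonUnitalNonAssocSemiring R] (d : ι → R) {g : ι → ι → R} (hg : ∀ i j, g j i = g i j) :
    ∑ i, ∑ j, d i * g i j =
      ∑ i, d i * g i i + ∑ i, ∑ j ∈ Finset.Ioi i, (d i + d j) * g i j := by
  simp only [sum_sum_eq_sum_diag_add_sum_sum_Ioi fun i j => d i * g i j, hg, add_mul]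

end PairSums

section Hessian

theorem transpose_fromBlocks_eq_neg {n R : Type*} [InvolutiveNeg R] {A C : Matrix n n R}
    (hA : Aᵀ = A) (hC : Cᵀ = -C) :
    (fromBlocks C (-A) A C)ᵀ = -fromBlocks C (-A) A C := by
  simp only [fromBlocks_transpose, fromBlocks_neg, transpose_neg, hA, hC, neg_neg]

variable {n R : Type*} [Fintype n] [CommRing R] {A C : Matrix n n R}

theorem matrixJ_mul_fromBlocks [DecidableEq n] (A C : Matrix n n R) :
    Matrix.J n R * fromBlocks A C (-C) A = fromBlocks C (-A) A C := by
  simp [Matrix.J, fromBlocks_multiply]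

theorem trace_diagonal_mul_matrixJ_mul_sq [DecidableEq n] (d : n → R)
    (hA : Aᵀ = A) (hC : Cᵀ = -C) :
    (diagonal (Sum.elim d d) * (Matrix.J n R * fromBlocks A C (-C) A) ^ 2).trace =
      -2 * ∑ i, ∑ j, d i * (A i j ^ 2 + C i j ^ 2) := by
  rw [matrixJ_mul_fromBlocks,
    trace_diagonal_mul_sq_of_transpose_eq_neg _ (transpose_fromBlocks_eq_neg hA hC)]
  simp only [Fintype.sum_sum_type, Sum.elim_inl, Sum.elim_inr, fromBlocks_apply₁₁,
    fromBlocks_apply₁₂, fromBlocks_apply₂₁, fromBlocks_apply₂₂, Matrix.neg_apply, neg_sq, mul_add,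
    Finset.sum_add_distrib]
  ring

theorem stmt_19_general [LinearOrder n] [LocallyFiniteOrderTop n] [LocallyFiniteOrderBot n]
    (d : n → R) (hA : Aᵀ = A) (hC : Cᵀ = -C) :
    (diagonal (Sum.elim d d) * (Matrix.J n R * fromBlocks A C (-C) A) ^ 2).trace =
      -2 * ∑ j, d j * A j j ^ 2 -
        2 * ∑ i, ∑ j ∈ Finset.Ioi i, (d i + d j) * (A i j ^ 2 + C i j ^ 2) := by
  have A_symm (i j : n) : A j i = A i j := congrFun₂ hA i j
  have C_skew (i j : n) : C j i = -C i j := congrFun₂ hC i j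
  have entries_symm (i j : n) : A j i ^ 2 + C j i ^ 2 = A i j ^ 2 + C i j ^ 2 := by
    rw [A_symm, C_skew, neg_sq]
  -- In characteristic 2 the diagonal of `C` need not vanish, but its contribution still does.
  have diagonal_sum : 2 * ∑ i, d i * (A i i ^ 2 + C i i ^ 2) = 2 * ∑ i, d i * A i i ^ 2 := by
    simp only [Finset.mul_sum]
    refine Finset.sum_congr rfl fun i _ => ?_
    linear_combination d i * C i i * C_skew i i
  rw [trace_diagonal_mul_matrixJ_mul_sq d hA hC,
    sum_sum_mul_eq_sum_diag_add_sum_sum_Ioi_of_symm d entries_symm]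
  linear_combination -diagonal_sum

end Hessian

theorem J_eq_neg_matrixJ (N : ℕ) : _root_.J N = -Matrix.J (Fin N) ℝ := by
  simp [_root_.J, Matrix.J, fromBlocks_neg]

/-- The Hessian quadratic form on the orthogonal symplectic group at the critical point
with characteristic matrix `D_m = diag(Δ, Δ)`: for `X = [[A, C], [−C, A]]` with `A`
symmetric and `C` skew-symmetric,
`Tr[D_m·(J·X)²] = −2·Σ_j δ_j·A_{jj}² − 2·Σ_{i<j} (δ_i + δ_j)·(A_{ij}² + C_{ij}²)`. -/
theorem stmt_19 (N m : ℕ) (hm : m ≤ N)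
    (A C : Matrix (Fin N) (Fin N) ℝ) (hA : Aᵀ = A) (hC : Cᵀ = -C) :
    (Matrix.diagonal (Sum.elim (delta N m) (delta N m)) *
        (J N * Matrix.fromBlocks A C (-C) A) ^ 2).trace
      = -2 * (∑ j : Fin N, delta N m j * A j j ^ 2)
        - 2 * (∑ i : Fin N, ∑ j : Fin N,
            if i < j then (delta N m i + delta N m j) * (A i j ^ 2 + C i j ^ 2) else 0) := by
  simpa only [J_eq_neg_matrixJ, neg_mul, neg_sq, ← Finset.sum_filter, Finset.filter_lt_eq_Ioi]
    using stmt_19_general (delta N m) hA hC
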